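/- Let F_1, F_2, … be a uniformly attracting sequence of correctly ordered automorphisms of ℂ^k with contraction constant b < 1 (so ‖F_n(z)‖ ≤ b‖z‖ on the unit ball B), and let Ω = {z : F(n)(z) → 0} be its basin of attraction. Let G_1, G_2, … be lower triangular polynomial automorphisms of ℂ^k with G_n′(0) = F_n′(0), of uniformly bounded degree with uniformly bounded coefficients, and let X_0, X_1, … be polynomial self-maps of ℂ^k with linear part the identity and uniformly bounded coefficients and degrees. Suppose there exist γ ≥ 1 with ‖G(n)^{-1}(w) − G(n)^{-1}(w′)‖ ≤ γ^n ‖w − w′‖ for all w, w′ ∈ B and all n, an integer q with γ b^q < 1, and C > 0 such that ‖G_n^{-1}(X_n(F_n(z))) − X_{n−1}(z)‖ ≤ C‖z‖^{q+1} for every n ≥ 1 and z ∈ B. Then the maps Ψ_n = G(n)^{-1} ∘ X_n ∘ F(n) converge uniformly on compact subsets of Ω to a biholomorphic map Ψ from Ω onto ℂ^k; in particular Ω is biholomorphic to ℂ^k. -/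

import Mathlib

open Metric Filter Topology

noncomputable section

/-- `ℂ^k` with the Euclidean norm. -/
abbrev Ck (k : ℕ) := EuclideanSpace ℂ (Fin k)

/-- `seqComp F n = F_{n-1} ∘ ⋯ ∘ F_0` (the composition of the first `n` maps). -/
def seqComp {α : Type*} (f : ℕ → α → α) : ℕ → α → α
  | 0 => id
  | n + 1 => f n ∘ seqComp f n

/-- `seqCompInv g n = g_0 ∘ ⋯ ∘ g_{n-1}`: if `g_m` is the inverse of `G_m`, this is the
inverse `G(n)⁻¹` of the composition `G(n) = G_{n-1} ∘ ⋯ ∘ G_0`. -/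
def seqCompInv {α : Type*} (g : ℕ → α → α) : ℕ → α → α
  | 0 => id
  | n + 1 => seqCompInv g n ∘ g n

/-- An automorphism of `ℂ^k`: a bijective holomorphic map with holomorphic inverse. -/
def IsAutomorphism {k : ℕ} (F : Ck k → Ck k) : Prop :=
  Differentiable ℂ F ∧ ∃ Finv : Ck k → Ck k, Differentiable ℂ Finv ∧
    Function.LeftInverse Finv F ∧ Function.RightInverse Finv F

/-- The matrix of the derivative of `F` at `0` in the standard basis. -/
def derivMatrix {k : ℕ} (F : Ck k → Ck k) : Matrix (Fin k) (Fin k) ℂ :=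
  fun i j => fderiv ℂ F 0 (EuclideanSpace.single j 1) i

/-- `F` is correctly ordered: `F'(0)` is lower triangular with diagonal entries satisfying
`|λ_j||λ_i| < |λ_l|` whenever `l ≤ j`, for every `i`. -/
def CorrectlyOrdered {k : ℕ} (F : Ck k → Ck k) : Prop :=
  (∀ i j : Fin k, i < j → derivMatrix F i j = 0) ∧
    ∀ l j i : Fin k, l ≤ j →
      ‖derivMatrix F j j‖ * ‖derivMatrix F i i‖ < ‖derivMatrix F l l‖

/-- The polynomial self-map of `ℂ^k` determined by a `k`-tuple of polynomials. -/
def evalPolyMap {k : ℕ} (P : Fin k → MvPolynomial (Fin k) ℂ) : Ck k → Ck k :=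
  fun z => (WithLp.equiv 2 (∀ _ : Fin k, ℂ)).symm
    (fun j => MvPolynomial.eval (fun i => z i) (P j))

/-- A polynomial map `G = (g_1, …, g_k)` with `G(0) = 0` is lower triangular if
`g_j(z) = c_j z_j + h_j(z_1, …, z_{j-1})`. -/
def LowerTriPolyMap {k : ℕ} (P : Fin k → MvPolynomial (Fin k) ℂ) : Prop :=
  ∀ j : Fin k, (P j).coeff 0 = 0 ∧
    ∀ d ∈ (P j).support, d = Finsupp.single j 1 ∨ ∀ i : Fin k, j ≤ i → d i = 0

/-!
On the basin, `F(n)` eventually contracts by `b` at each step, so `Ψ_{n+1}` and `Ψ_n` differ by at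
most `C γ ^ n ‖F(n) z‖ ^ (q + 1)`, which decays geometrically; the limit `Ψ` is therefore
holomorphic. To invert it, solve `X_n` near the origin by a holomorphic map `T_n` and consider
`φ_n = F(n)⁻¹ ∘ T_n ∘ G(n)`. Since `G_n` is triangular with diagonal of size at most `b`, the maps
`G(n)` decay on bounded sets like `ρ ^ n` for every `ρ > b`, so `φ_n` is eventually defined on any
given ball, `Ψ_n ∘ φ_n` is the identity there, and `Ψ ∘ φ_n → id` uniformly. By Cauchy's estimate
`Ψ ∘ φ_n` is then a Lipschitz-small perturbation of the identity, hence injective with a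
large image. As every point of the basin is attained by `φ_n` on a fixed ball for large `n`, `Ψ` is
injective and onto.
-/

section Holomorphic

variable {E F : Type*} [NormedAddCommGroup E] [NormedSpace ℂ E]
  [NormedAddCommGroup F] [NormedSpace ℂ F]

theorem norm_sub_le_of_differentiableOn_ball {f : E → F} {R ε : ℝ}
    (hf : DifferentiableOn ℂ f (ball 0 R)) (hε : ∀ z ∈ ball (0 : E) R, ‖f z‖ ≤ ε) {x y : E}
    (hx : x ∈ ball (0 : E) (R / 3)) (hy : y ∈ ball (0 : E) (R / 3)) :
    ‖f x - f y‖ ≤ 3 * ε / R * ‖x - y‖ := by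
  rw [mem_ball_zero_iff] at hx hy
  have hR : 0 < R := by linarith [norm_nonneg x]
  have hsub : ball y (2 * R / 3) ⊆ ball 0 R :=
    ball_subset_ball' (by rw [dist_zero_right]; linarith)
  have hmaps : Set.MapsTo f (ball y (2 * R / 3)) (closedBall (f y) (2 * ε)) := fun z hz => by
    rw [mem_closedBall, dist_eq_norm]
    linarith [norm_sub_le (f z) (f y), hε z (hsub hz), hε y (hsub (mem_ball_self (by positivity)))]
  have hxy : x ∈ ball y (2 * R / 3) := by
    rw [mem_ball, dist_eq_norm]
    linarith [norm_sub_le x y]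
  calc ‖f x - f y‖ ≤ 2 * ε / (2 * R / 3) * ‖x - y‖ := by
        simpa only [dist_eq_norm] using
          Complex.dist_le_div_mul_dist_of_mapsTo_ball (hf.mono hsub) hmaps hxy
    _ = 3 * ε / R * ‖x - y‖ := by field_simp

theorem uniformCauchySeqOn_fderiv {U : Set E} {f : ℕ → E → F} {x₀ : E} {r : ℝ} (hr : 0 < r)
    (hU : ball x₀ (2 * r) ⊆ U) (hf : ∀ n, DifferentiableOn ℂ (f n) U)
    (hcauchy : UniformCauchySeqOn f atTop U) :
    UniformCauchySeqOn (fun n => fderiv ℂ (f n)) atTop (ball x₀ r) := by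
  rw [Metric.uniformCauchySeqOn_iff] at hcauchy ⊢
  intro ε hε
  obtain ⟨N, hN⟩ := hcauchy (ε * r / 4) (by positivity)
  refine ⟨N, fun m hm n hn x hx => ?_⟩
  have hball : ball x r ⊆ U :=
    (ball_subset_ball' (by linarith [mem_ball.1 hx])).trans hU
  have hxU : U ∈ 𝓝 x := mem_of_superset (ball_mem_nhds x hr) hball
  have hmaps : Set.MapsTo (f m - f n) (ball x r) (closedBall ((f m - f n) x) (ε * r / 2)) := by
    intro z hz
    have hz' := hN m hm n hn z (hball hz)
    have hx' := hN m hm n hn x (mem_of_mem_nhds hxU)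
    rw [dist_eq_norm] at hz' hx'
    rw [mem_closedBall, dist_eq_norm, Pi.sub_apply, Pi.sub_apply]
    linarith [norm_sub_le (f m z - f n z) (f m x - f n x)]
  calc dist (fderiv ℂ (f m) x) (fderiv ℂ (f n) x) = ‖fderiv ℂ (f m - f n) x‖ := by
        rw [dist_eq_norm,
          fderiv_sub ((hf m).differentiableAt hxU) ((hf n).differentiableAt hxU)]
    _ ≤ ε * r / 2 / r := Complex.norm_fderiv_le_div_of_mapsTo_ball
        (((hf m).sub (hf n)).mono hball) hmaps hr
    _ = ε / 2 := by field_simp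
    _ < ε := half_lt_self hε

theorem differentiableOn_of_tendstoUniformlyOn [CompleteSpace F] {U : Set E} (hU : IsOpen U)
    {f : ℕ → E → F} {g : E → F} (hf : ∀ n, DifferentiableOn ℂ (f n) U)
    (hfg : TendstoUniformlyOn f g atTop U) : DifferentiableOn ℂ g U := by
  intro x₀ hx₀
  obtain ⟨r, hr, hsub⟩ := Metric.isOpen_iff.1 hU x₀ hx₀
  have hball : ball x₀ (r / 2) ⊆ U := (ball_subset_ball (by linarith)).trans hsub
  have hcauchy : UniformCauchySeqOn (fun n => fderiv ℂ (f n)) atTop (ball x₀ (r / 2)) :=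
    uniformCauchySeqOn_fderiv (half_pos hr) (by rwa [mul_div_cancel₀ r two_ne_zero]) hf
      hfg.uniformCauchySeqOn
  have hlim : ∀ x ∈ ball x₀ (r / 2), ∃ l, Tendsto (fun n => fderiv ℂ (f n) x) atTop (𝓝 l) :=
    fun x hx => cauchySeq_tendsto_of_complete (hcauchy.cauchySeq hx)
  choose! g' hg' using hlim
  exact (hasFDerivAt_of_tendstoUniformlyOn isOpen_ball (hcauchy.tendstoUniformlyOn_of_tendsto hg')
    (fun n x hx => ((hf n).differentiableAt (hU.mem_nhds (hball hx))).hasFDerivAt)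
    (fun x hx => hfg.tendsto_at (hball hx))
    (mem_ball_self (half_pos hr))).differentiableAt.differentiableWithinAt

end Holomorphic

section NearIdentity

variable {E : Type*} [NormedAddCommGroup E]

/-- `f` is close to the identity on `s`: the displacement `f - id` is `1/2`-Lipschitz there. Such a
map is injective on `s` and, on a ball of a Banach space, has a large image. -/
def NearIdOn (f : E → E) (s : Set E) : Prop :=
  ∀ x ∈ s, ∀ y ∈ s, ‖(f x - x) - (f y - y)‖ ≤ 1 / 2 * ‖x - y‖

namespace NearIdOn

variable {f : E → E} {s : Set E} {r : ℝ}

theorem norm_sub_le (hf : NearIdOn f s) {x y : E} (hx : x ∈ s) (hy : y ∈ s) :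
    ‖x - y‖ ≤ 2 * ‖f x - f y‖ := by
  have htri : ‖x - y‖ ≤ ‖f x - f y‖ + ‖(f x - x) - (f y - y)‖ :=
    calc ‖x - y‖ = ‖(f x - f y) - ((f x - x) - (f y - y))‖ := by congr 1; abel
      _ ≤ _ := _root_.norm_sub_le _ _
  linarith [hf x hx y hy]

theorem injOn (hf : NearIdOn f s) : Set.InjOn f s := fun x hx y hy hxy => by
  simpa [hxy, sub_eq_zero] using hf.norm_sub_le hx hy

theorem norm_le (hf : NearIdOn f s) (h0 : (0 : E) ∈ s) (hf0 : f 0 = 0) {x : E} (hx : x ∈ s) :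
    ‖f x‖ ≤ 3 / 2 * ‖x‖ := by
  have hdisp : ‖f x - x‖ ≤ 1 / 2 * ‖x‖ := by simpa [hf0] using hf x hx 0 h0
  linarith [norm_le_norm_sub_add (f x) x]

variable [NormedSpace ℂ E]

theorem norm_fderiv_sub_id_le (hf : NearIdOn f s) {x : E} (hs : s ∈ 𝓝 x)
    (hfx : DifferentiableAt ℂ f x) : ‖fderiv ℂ f x - ContinuousLinearMap.id ℂ E‖ ≤ 1 / 2 := by
  refine (hfx.hasFDerivAt.sub (hasFDerivAt_id x)).le_of_lip' (by norm_num) ?_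
  filter_upwards [hs] with y hy
  exact hf y hy x (mem_of_mem_nhds hs)

theorem approximatesLinearOn (hf : NearIdOn f s) :
    ApproximatesLinearOn f (ContinuousLinearEquiv.refl ℂ E : E →L[ℂ] E) s (1 / 2) := by
  intro x hx y hy
  calc ‖f x - f y - (x - y)‖ = ‖(f x - x) - (f y - y)‖ := by congr 1; abel
    _ ≤ _ := by simpa using hf x hx y hy

theorem exists_fderiv_eq_equiv [CompleteSpace E] (hf : NearIdOn f s) {x : E} (hs : s ∈ 𝓝 x)
    (hfx : DifferentiableAt ℂ f x) : ∃ L : E ≃L[ℂ] E, (L : E →L[ℂ] E) = fderiv ℂ f x := by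
  have hlt : ‖ContinuousLinearMap.id ℂ E - fderiv ℂ f x‖ < 1 := by
    rw [norm_sub_rev]
    linarith [hf.norm_fderiv_sub_id_le hs hfx]
  obtain ⟨u, hu⟩ : IsUnit (fderiv ℂ f x) := by
    simpa [ContinuousLinearMap.one_def] using isUnit_one_sub_of_norm_lt_one hlt
  exact ⟨ContinuousLinearEquiv.ofUnit u, hu⟩

theorem exists_differentiableOn_rightInverse [CompleteSpace E] (hr : 0 < r)
    (hf : NearIdOn f (ball 0 r)) (hfd : DifferentiableOn ℂ f (ball 0 r)) :
    ∃ T : E → E, DifferentiableOn ℂ T (ball (f 0) (r / 2)) ∧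
      ∀ w ∈ ball (f 0) (r / 2), T w ∈ ball (0 : E) r ∧ f (T w) = w := by
  rcases subsingleton_or_nontrivial E with hE | hE
  · refine ⟨id, differentiableOn_id, fun w _ => ⟨?_, Subsingleton.elim _ _⟩⟩
    rw [Subsingleton.elim (id w) 0]
    exact mem_ball_self hr
  have happ := hf.approximatesLinearOn
  have hnorm : ‖((ContinuousLinearEquiv.refl ℂ E).symm : E →L[ℂ] E)‖₊ = 1 := by simp
  have hhalf : Subsingleton E ∨
      (1 / 2 : NNReal) < ‖((ContinuousLinearEquiv.refl ℂ E).symm : E →L[ℂ] E)‖₊⁻¹ :=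
    .inr (by rw [hnorm, inv_one]; exact NNReal.half_lt_self one_ne_zero)
  let e := happ.toOpenPartialHomeomorph f (ball 0 r) hhalf isOpen_ball
  have htarget : ball (f 0) (r / 2) ⊆ e.target := fun w hw => by
    rw [mem_ball] at hw
    refine happ.closedBall_subset_target hhalf isOpen_ball (b := 0) (ε := 2 * dist w (f 0))
      (by positivity) (closedBall_subset_ball (by linarith)) ?_
    rw [hnorm, mem_closedBall]
    norm_num
    linarith
  have hmem : ∀ w ∈ ball (f 0) (r / 2), e.symm w ∈ ball (0 : E) r :=
    fun w hw => e.map_target (htarget hw)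
  refine ⟨e.symm, fun w hw => ?_, fun w hw => ⟨hmem w hw, e.right_inv (htarget hw)⟩⟩
  have hnhds : ball (0 : E) r ∈ 𝓝 (e.symm w) := isOpen_ball.mem_nhds (hmem w hw)
  have hdiff := hfd.differentiableAt hnhds
  obtain ⟨L, hL⟩ := hf.exists_fderiv_eq_equiv hnhds hdiff
  exact (e.hasFDerivAt_symm (htarget hw)
    (hL ▸ hdiff.hasFDerivAt)).differentiableAt.differentiableWithinAt

end NearIdOn

variable [NormedSpace ℂ E]

theorem nearIdOn_of_norm_sub_le {f : E → E} {R ε : ℝ} (hf : DifferentiableOn ℂ f (ball 0 R))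
    (hε : ∀ z ∈ ball (0 : E) R, ‖f z - z‖ ≤ ε) (hεR : 6 * ε ≤ R) :
    NearIdOn f (ball 0 (R / 3)) := fun x hx y hy => by
  have hR : 0 < R := by linarith [norm_nonneg x, mem_ball_zero_iff.1 hx]
  refine (norm_sub_le_of_differentiableOn_ball (hf.sub differentiableOn_id) hε hx hy).trans ?_
  refine mul_le_mul_of_nonneg_right ?_ (norm_nonneg _)
  rw [div_le_iff₀ hR]
  linarith

end NearIdentity

section ApproxInverses

variable {E : Type*} [NormedAddCommGroup E] [NormedSpace ℂ E]

/-- `Ψ` maps `Ω` biholomorphically onto the whole space. The values of `Ψ` off `Ω` are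
irrelevant. -/
def IsBiholomorphicOnto (Ψ : E → E) (Ω : Set E) : Prop :=
  DifferentiableOn ℂ Ψ Ω ∧ ∃ Φ : E → E, Differentiable ℂ Φ ∧ (∀ w, Φ w ∈ Ω) ∧
    Set.LeftInvOn Φ Ψ Ω ∧ Function.RightInverse Φ Ψ

/-- The maps `φ n` are asymptotic inverses of `Ψ : Ω → E`: on every ball they are eventually
holomorphic sections of `Ψ` up to a uniformly small error, and every point of `Ω` is eventually
attained on a fixed ball. -/
structure ApproxInverses (φ : ℕ → E → E) (Ψ : E → E) (Ω : Set E) : Prop where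
  differentiableOn : ∀ R, ∀ᶠ n in atTop, DifferentiableOn ℂ (φ n) (ball 0 R)
  mapsTo : ∀ R, ∀ᶠ n in atTop, Set.MapsTo (φ n) (ball 0 R) Ω
  norm_sub_le : ∀ R, ∀ ε > 0, ∀ᶠ n in atTop, ∀ w ∈ ball (0 : E) R, ‖Ψ (φ n w) - w‖ ≤ ε
  mem_image : ∀ z ∈ Ω, ∃ R, ∀ᶠ n in atTop, z ∈ φ n '' ball 0 R

namespace ApproxInverses

variable {φ : ℕ → E → E} {Ψ : E → E} {Ω : Set E}

theorem eventually_nearIdOn (hφ : ApproxInverses φ Ψ Ω) (hΨ : DifferentiableOn ℂ Ψ Ω) {R : ℝ}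
    (hR : 0 < R) : ∀ᶠ n in atTop, NearIdOn (Ψ ∘ φ n) (ball 0 R) := by
  filter_upwards [hφ.differentiableOn (3 * R), hφ.mapsTo (3 * R),
    hφ.norm_sub_le (3 * R) (R / 2) (half_pos hR)] with n hdiff hmaps hclose
  simpa only [mul_div_cancel_left₀ R three_ne_zero] using
    nearIdOn_of_norm_sub_le (hΨ.comp hdiff hmaps) hclose (by linarith)

theorem injOn (hφ : ApproxInverses φ Ψ Ω) (hΨ : DifferentiableOn ℂ Ψ Ω) : Set.InjOn Ψ Ω := by
  intro z hz z' hz' heq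
  obtain ⟨R, hR⟩ := hφ.mem_image z hz
  obtain ⟨R', hR'⟩ := hφ.mem_image z' hz'
  set S := max 1 (max R R')
  have hS : 0 < S := one_pos.trans_le (le_max_left _ _)
  obtain ⟨n, hnear, ⟨x, hx, rfl⟩, ⟨y, hy, rfl⟩⟩ :=
    ((hφ.eventually_nearIdOn hΨ hS).and (hR.and hR')).exists
  have hx' : x ∈ ball (0 : E) S := ball_subset_ball (by simp [S]) hx
  have hy' : y ∈ ball (0 : E) S := ball_subset_ball (by simp [S]) hy
  rw [hnear.injOn hx' hy' heq]

theorem exists_rightInverse_on_ball [CompleteSpace E] (hφ : ApproxInverses φ Ψ Ω)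
    (hΨ : DifferentiableOn ℂ Ψ Ω) {R : ℝ} (hR : 0 < R) :
    ∃ T : E → E, DifferentiableOn ℂ T (ball 0 R) ∧ ∀ w ∈ ball (0 : E) R, T w ∈ Ω ∧ Ψ (T w) = w := by
  have hR4 : 0 < 4 * R := by positivity
  obtain ⟨n, hnear, hdiff, hmaps, hclose⟩ := ((hφ.eventually_nearIdOn hΨ hR4).and
    ((hφ.differentiableOn (4 * R)).and ((hφ.mapsTo (4 * R)).and
      (hφ.norm_sub_le (4 * R) R hR)))).exists
  obtain ⟨S, hSdiff, hS⟩ :=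
    hnear.exists_differentiableOn_rightInverse hR4 (hΨ.comp hdiff hmaps)
  have hsub : ball (0 : E) R ⊆ ball ((Ψ ∘ φ n) 0) (4 * R / 2) := by
    refine ball_subset_ball' ?_
    have hcenter : ‖Ψ (φ n 0)‖ ≤ R := by simpa using hclose 0 (mem_ball_self hR4)
    rw [dist_zero_left, Function.comp_apply]
    linarith
  exact ⟨φ n ∘ S, hdiff.comp (hSdiff.mono hsub) fun w hw => (hS w (hsub hw)).1,
    fun w hw => ⟨hmaps (hS w (hsub hw)).1, (hS w (hsub hw)).2⟩⟩

theorem isBiholomorphicOnto [CompleteSpace E] (hφ : ApproxInverses φ Ψ Ω)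
    (hΨ : DifferentiableOn ℂ Ψ Ω) : IsBiholomorphicOnto Ψ Ω := by
  have hmem : ∀ w : E, w ∈ ball (0 : E) (‖w‖ + 1) := fun w => by simp
  have hlocal := fun w : E =>
    hφ.exists_rightInverse_on_ball hΨ (R := ‖w‖ + 1) (by positivity)
  choose T hTdiff hT using hlocal
  have hunique : ∀ w, ∀ v ∈ ball (0 : E) (‖w‖ + 1), T v v = T w v := fun w v hv =>
    hφ.injOn hΨ (hT v v (hmem v)).1 (hT w v hv).1 ((hT v v (hmem v)).2.trans (hT w v hv).2.symm)
  refine ⟨hΨ, fun w => T w w, fun w => ?_, fun w => (hT w w (hmem w)).1,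
    fun z hz => hφ.injOn hΨ (hT _ _ (hmem _)).1 hz (hT _ _ (hmem _)).2,
    fun w => (hT w w (hmem w)).2⟩
  have hnhds : ball (0 : E) (‖w‖ + 1) ∈ 𝓝 w := isOpen_ball.mem_nhds (hmem w)
  exact ((hTdiff w).differentiableAt hnhds).congr_of_eventuallyEq
    (mem_of_superset hnhds (hunique w))

end ApproxInverses

end ApproxInverses


section Sequences

variable {E : Type*} [NormedAddCommGroup E]

section HolomorphicInverse

variable [NormedSpace ℂ E]

/-- `f` is an automorphism of the whole space with inverse `g`: both maps are holomorphic, and they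
are two-sided inverses of each other. -/
structure IsHolomorphicInverse (g f : E → E) : Prop where
  differentiable : Differentiable ℂ f
  differentiable_inv : Differentiable ℂ g
  leftInverse : Function.LeftInverse g f
  rightInverse : Function.RightInverse g f

theorem isHolomorphicInverse_seqCompInv {g f : ℕ → E → E}
    (h : ∀ n, IsHolomorphicInverse (g n) (f n)) :
    ∀ n, IsHolomorphicInverse (seqCompInv g n) (seqComp f n)
  | 0 => ⟨differentiable_id, differentiable_id, fun _ => rfl, fun _ => rfl⟩
  | n + 1 =>
    have ih := isHolomorphicInverse_seqCompInv h n
    ⟨(h n).differentiable.comp ih.differentiable,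
      ih.differentiable_inv.comp (h n).differentiable_inv,
      (h n).leftInverse.comp ih.leftInverse, (h n).rightInverse.comp ih.rightInverse⟩

end HolomorphicInverse

/-- The maps `F n` contract the unit ball towards the origin with a common factor `b < 1`. -/
structure UniformlyContracting (F : ℕ → E → E) (b : ℝ) : Prop where
  nonneg : 0 ≤ b
  lt_one : b < 1
  norm_le : ∀ n, ∀ z ∈ ball (0 : E) 1, ‖F n z‖ ≤ b * ‖z‖

/-- The basin of attraction of the origin for the non-autonomous system `F`. -/
def basin (F : ℕ → E → E) : Set E :=
  {z | Tendsto (fun n => seqComp F n z) atTop (𝓝 0)}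

/-- The points that lie within distance `r` of the origin after `n` steps. For a contracting
sequence and `r ≤ 1` these sets exhaust the basin. -/
def trap (F : ℕ → E → E) (r : ℝ) (n : ℕ) : Set E :=
  {z | ‖seqComp F n z‖ < r}

theorem isOpen_trap {F : ℕ → E → E} {n : ℕ} (hF : Continuous (seqComp F n)) (r : ℝ) :
    IsOpen (trap F r n) :=
  isOpen_lt hF.norm continuous_const

theorem eventually_mem_trap {F : ℕ → E → E} {r : ℝ} (hr : 0 < r) {z : E} (hz : z ∈ basin F) :
    ∀ᶠ n in atTop, z ∈ trap F r n := by
  have hlim : Tendsto (fun n => ‖seqComp F n z‖) atTop (𝓝 0) :=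
    tendsto_zero_iff_norm_tendsto_zero.1 hz
  exact hlim.eventually_lt_const hr

namespace UniformlyContracting

variable {F : ℕ → E → E} {b r : ℝ} {n : ℕ} {z : E}

theorem norm_seqComp_add_le (hF : UniformlyContracting F b) (hz : ‖seqComp F n z‖ < 1) (i : ℕ) :
    ‖seqComp F (n + i) z‖ ≤ b ^ i * ‖seqComp F n z‖ := by
  induction i with
  | zero => simp
  | succ i ih =>
    have hlt : ‖seqComp F (n + i) z‖ < 1 :=
      (ih.trans (mul_le_of_le_one_left (norm_nonneg _)
        (pow_le_one₀ hF.nonneg hF.lt_one.le))).trans_lt hz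
    calc ‖seqComp F (n + (i + 1)) z‖ ≤ b * ‖seqComp F (n + i) z‖ :=
          hF.norm_le _ _ (mem_ball_zero_iff.2 hlt)
      _ ≤ b * (b ^ i * ‖seqComp F n z‖) := by gcongr; exact hF.nonneg
      _ = b ^ (i + 1) * ‖seqComp F n z‖ := by ring

theorem monotone_trap (hF : UniformlyContracting F b) (hr : r ≤ 1) : Monotone (trap F r) :=
  monotone_nat_of_le_succ fun n z hz =>
    (hF.norm_seqComp_add_le (hz.trans_le hr) 1).trans_lt <|
      (mul_le_of_le_one_left (norm_nonneg _) (by rw [pow_one]; exact hF.lt_one.le)).trans_lt hz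

theorem trap_subset_basin (hF : UniformlyContracting F b) (hr : r ≤ 1) :
    trap F r n ⊆ basin F := fun z hz => by
  refine (tendsto_add_atTop_iff_nat n).1 (tendsto_zero_iff_norm_tendsto_zero.2 ?_)
  have hgeom : Tendsto (fun i => b ^ i * ‖seqComp F n z‖) atTop (𝓝 0) := by
    simpa using (tendsto_pow_atTop_nhds_zero_of_lt_one hF.nonneg hF.lt_one).mul_const _
  refine squeeze_zero (fun _ => norm_nonneg _) (fun i => ?_) hgeom
  rw [add_comm]
  exact hF.norm_seqComp_add_le (hz.trans_le hr) i

theorem exists_subset_trap_of_isCompact (hF : UniformlyContracting F b)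
    (hcont : ∀ n, Continuous (seqComp F n)) (hr : 0 < r) (hr1 : r ≤ 1) {K : Set E}
    (hK : IsCompact K) (hKF : K ⊆ basin F) : ∃ n, K ⊆ trap F r n :=
  hK.elim_directed_cover _ (fun n => isOpen_trap (hcont n) r)
    (fun _ hz => Set.mem_iUnion.2 (eventually_mem_trap hr (hKF hz)).exists)
    (hF.monotone_trap hr1).directed_le

end UniformlyContracting

end Sequences

section Telescope

variable {E : Type*} [NormedAddCommGroup E]

/-- The telescoping map `Ψ_n = G(n)⁻¹ ∘ X_n ∘ F(n)`, where `g m` is the inverse of `G_m`. -/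
def telescope (F X g : ℕ → E → E) (n : ℕ) (z : E) : E :=
  seqCompInv g n (X n (seqComp F n z))

/-- The limit of the telescoping maps. It is meaningful only on the basin of `F`; elsewhere it has
the junk value of `limUnder`. -/
def telescopeLimit (F X g : ℕ → E → E) (z : E) : E :=
  limUnder atTop fun n => telescope F X g n z

/-- The quantitative hypotheses under which the telescoping maps converge: `F` contracts by `b`, the
maps `X n` are close to the identity on the ball of radius `r`, the compositions `G(n)⁻¹` expand at
most by `γ ^ n`, and the equation `G_n⁻¹ ∘ X_{n+1} ∘ F_n = X_n` holds up to order `q + 1`. -/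
structure TelescopingBounds (F X g : ℕ → E → E) (b γ C r : ℝ) (q : ℕ) : Prop
    extends UniformlyContracting F b where
  expansion_nonneg : 0 ≤ γ
  rate_lt_one : γ * b ^ (q + 1) < 1
  lipschitz : ∀ n, ∀ w ∈ ball (0 : E) 1, ∀ w' ∈ ball (0 : E) 1,
    ‖seqCompInv g n w - seqCompInv g n w'‖ ≤ γ ^ n * ‖w - w'‖
  map_zero : ∀ n, X n 0 = 0
  nearIdOn : ∀ n, NearIdOn (X n) (ball 0 r)
  defect_nonneg : 0 ≤ C
  defect_le : ∀ n, ∀ z ∈ ball (0 : E) 1, ‖g n (X (n + 1) (F n z)) - X n z‖ ≤ C * ‖z‖ ^ (q + 1)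
  radius_pos : 0 < r
  radius_le : r ≤ 1 / 3
  defect_mul_radius_le : C * r ≤ 1 / 4

namespace TelescopingBounds

variable {F X g : ℕ → E → E} {b γ C r : ℝ} {q n : ℕ} {z : E}

theorem radius_le_one (h : TelescopingBounds F X g b γ C r q) : r ≤ 1 :=
  h.radius_le.trans (by norm_num)

theorem norm_map_le (h : TelescopingBounds F X g b γ C r q) (hz : ‖z‖ < r) :
    ‖X n z‖ ≤ 3 / 2 * ‖z‖ :=
  (h.nearIdOn n).norm_le (mem_ball_self h.radius_pos) (h.map_zero n) (mem_ball_zero_iff.2 hz)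

theorem dist_telescope_succ_le (h : TelescopingBounds F X g b γ C r q) (hz : z ∈ trap F r n) :
    dist (telescope F X g n z) (telescope F X g (n + 1) z) ≤
      C * γ ^ n * ‖seqComp F n z‖ ^ (q + 1) := by
  set u := seqComp F n z
  have hu : ‖u‖ < r := hz
  have hu1 : ‖u‖ < 1 := hu.trans_le h.radius_le_one
  have hdefect := h.defect_le n u (mem_ball_zero_iff.2 hu1)
  have hsmall : C * ‖u‖ ^ (q + 1) ≤ 1 / 4 :=
    calc C * ‖u‖ ^ (q + 1) ≤ C * ‖u‖ := by
          gcongr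
          · exact h.defect_nonneg
          · exact pow_le_of_le_one (norm_nonneg _) hu1.le q.succ_ne_zero
      _ ≤ C * r := by gcongr; exact h.defect_nonneg
      _ ≤ 1 / 4 := h.defect_mul_radius_le
  have hX : ‖X n u‖ ≤ 1 / 2 := by linarith [h.norm_map_le (n := n) hu, h.radius_le]
  have hgX : ‖g n (X (n + 1) (F n u))‖ < 1 := by
    linarith [norm_le_norm_sub_add (g n (X (n + 1) (F n u))) (X n u)]
  calc dist (telescope F X g n z) (telescope F X g (n + 1) z)
      ≤ γ ^ n * ‖g n (X (n + 1) (F n u)) - X n u‖ := by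
        rw [dist_comm, dist_eq_norm]
        exact h.lipschitz n _ (mem_ball_zero_iff.2 hgX) _ (mem_ball_zero_iff.2 (by linarith))
    _ ≤ γ ^ n * (C * ‖u‖ ^ (q + 1)) := by
        gcongr
        exact pow_nonneg h.expansion_nonneg n
    _ = C * γ ^ n * ‖u‖ ^ (q + 1) := by ring

theorem dist_telescope_add_succ_le (h : TelescopingBounds F X g b γ C r q) (hz : z ∈ trap F r n)
    (i : ℕ) :
    dist (telescope F X g (n + i) z) (telescope F X g (n + (i + 1)) z) ≤
      C * γ ^ n * ‖seqComp F n z‖ ^ (q + 1) * (γ * b ^ (q + 1)) ^ i := by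
  have hz' : z ∈ trap F r (n + i) := h.monotone_trap h.radius_le_one (n.le_add_right i) hz
  have hC := h.defect_nonneg
  have hγ := h.expansion_nonneg
  calc dist (telescope F X g (n + i) z) (telescope F X g (n + (i + 1)) z)
      ≤ C * γ ^ (n + i) * ‖seqComp F (n + i) z‖ ^ (q + 1) := h.dist_telescope_succ_le hz'
    _ ≤ C * γ ^ (n + i) * (b ^ i * ‖seqComp F n z‖) ^ (q + 1) := by
        gcongr
        exact h.norm_seqComp_add_le (hz.trans_le h.radius_le_one) i
    _ = C * γ ^ n * ‖seqComp F n z‖ ^ (q + 1) * (γ * b ^ (q + 1)) ^ i := by ring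

theorem tendsto_telescope [CompleteSpace E] (h : TelescopingBounds F X g b γ C r q)
    (hz : z ∈ basin F) :
    Tendsto (fun n => telescope F X g n z) atTop (𝓝 (telescopeLimit F X g z)) := by
  obtain ⟨n, hn⟩ := (eventually_mem_trap h.radius_pos hz).exists
  have hcauchy : CauchySeq fun i => telescope F X g (n + i) z :=
    cauchySeq_of_le_geometric _ _ h.rate_lt_one (h.dist_telescope_add_succ_le hn)
  obtain ⟨l, hl⟩ := cauchySeq_tendsto_of_complete hcauchy
  refine tendsto_nhds_limUnder ⟨l, (tendsto_add_atTop_iff_nat n).1 ?_⟩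
  simpa only [add_comm] using hl

theorem dist_telescope_add_limit_le [CompleteSpace E] (h : TelescopingBounds F X g b γ C r q)
    (hz : z ∈ trap F r n) (i : ℕ) :
    dist (telescope F X g (n + i) z) (telescopeLimit F X g z) ≤
      C * γ ^ n * ‖seqComp F n z‖ ^ (q + 1) * (γ * b ^ (q + 1)) ^ i / (1 - γ * b ^ (q + 1)) := by
  have hlim := h.tendsto_telescope (h.trap_subset_basin h.radius_le_one hz)
  refine dist_le_of_le_geometric_of_tendsto _ _ h.rate_lt_one (h.dist_telescope_add_succ_le hz)
    (f := fun i => telescope F X g (n + i) z) ?_ i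
  simpa only [add_comm] using (tendsto_add_atTop_iff_nat n).2 hlim

theorem tendstoUniformlyOn_trap [CompleteSpace E] (h : TelescopingBounds F X g b γ C r q) (n : ℕ) :
    TendstoUniformlyOn (telescope F X g) (telescopeLimit F X g) atTop (trap F r n) := by
  set θ := γ * b ^ (q + 1)
  have hθ0 : 0 ≤ θ := mul_nonneg h.expansion_nonneg (pow_nonneg h.nonneg _)
  have hγ := h.expansion_nonneg
  have hC := h.defect_nonneg
  have hgeom : Tendsto (fun m => C * γ ^ n * r ^ (q + 1) * θ ^ (m - n) / (1 - θ)) atTop (𝓝 0) := by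
    have hpow := (tendsto_pow_atTop_nhds_zero_of_lt_one hθ0 h.rate_lt_one).comp
      (tendsto_sub_atTop_nat n)
    simpa using (hpow.const_mul (C * γ ^ n * r ^ (q + 1))).div_const (1 - θ)
  rw [Metric.tendstoUniformlyOn_iff]
  intro ε hε
  filter_upwards [hgeom.eventually_lt_const hε, eventually_ge_atTop n] with m hm hnm z hz
  rw [dist_comm]
  refine lt_of_le_of_lt ?_ hm
  have hdist := h.dist_telescope_add_limit_le hz (m - n)
  rw [Nat.add_sub_cancel' hnm] at hdist
  refine hdist.trans ?_
  have hθ1 : 0 ≤ 1 - θ := sub_nonneg.2 h.rate_lt_one.le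
  gcongr
  exact le_of_lt hz

theorem tendstoUniformlyOn_of_isCompact [CompleteSpace E] (h : TelescopingBounds F X g b γ C r q)
    (hcont : ∀ n, Continuous (seqComp F n)) {K : Set E} (hKF : K ⊆ basin F) (hK : IsCompact K) :
    TendstoUniformlyOn (telescope F X g) (telescopeLimit F X g) atTop K := by
  obtain ⟨n, hn⟩ := h.exists_subset_trap_of_isCompact hcont h.radius_pos h.radius_le_one hK hKF
  exact (h.tendstoUniformlyOn_trap n).mono hn

theorem differentiableOn_telescopeLimit [NormedSpace ℂ E] [CompleteSpace E]
    (h : TelescopingBounds F X g b γ C r q) (hcont : ∀ n, Continuous (seqComp F n))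
    (hdiff : ∀ n, Differentiable ℂ (telescope F X g n)) :
    DifferentiableOn ℂ (telescopeLimit F X g) (basin F) := fun z hz => by
  obtain ⟨n, hn⟩ := (eventually_mem_trap h.radius_pos hz).exists
  have hopen : IsOpen (trap F r n) := isOpen_trap (hcont n) r
  have hlim : DifferentiableOn ℂ (telescopeLimit F X g) (trap F r n) :=
    differentiableOn_of_tendstoUniformlyOn hopen (fun m => (hdiff m).differentiableOn)
      (h.tendstoUniformlyOn_trap n)
  exact (hlim.differentiableAt (hopen.mem_nhds hn)).differentiableWithinAt

end TelescopingBounds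

end Telescope

section TelescopeInverse

variable {E : Type*} [NormedAddCommGroup E]

/-- The compositions `G(n)` tend to zero at least as fast as `ρ ^ n`, uniformly on bounded sets. -/
def HasGeometricDecay (G : ℕ → E → E) (ρ : ℝ) : Prop :=
  ∀ R, ∃ A, ∀ n, ∀ w ∈ ball (0 : E) R, ‖seqComp G n w‖ ≤ A * ρ ^ n

theorem HasGeometricDecay.eventually_norm_lt {G : ℕ → E → E} {ρ : ℝ} (hG : HasGeometricDecay G ρ)
    (hρ0 : 0 ≤ ρ) (hρ1 : ρ < 1) {s : ℝ} (hs : 0 < s) (R : ℝ) :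
    ∀ᶠ n in atTop, ∀ w ∈ ball (0 : E) R, ‖seqComp G n w‖ < s := by
  obtain ⟨A, hA⟩ := hG R
  have hgeom : Tendsto (fun n => A * ρ ^ n) atTop (𝓝 0) := by
    simpa using (tendsto_pow_atTop_nhds_zero_of_lt_one hρ0 hρ1).const_mul A
  filter_upwards [hgeom.eventually_lt_const hs] with n hn w hw
  exact (hA n w hw).trans_lt hn

/-- The local inverse `F(n)⁻¹ ∘ T_n ∘ G(n)` of the telescoping map `G(n)⁻¹ ∘ X_n ∘ F(n)`, where
`T n` is a local inverse of `X_n` and `f m` is the inverse of `F_m`. -/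
def telescopeInv (f T G : ℕ → E → E) (n : ℕ) (w : E) : E :=
  seqCompInv f n (T n (seqComp G n w))

theorem telescopeInv_mem_trap {F f T G : ℕ → E → E} {r : ℝ} {n : ℕ} {w : E}
    (hf : Function.RightInverse (seqCompInv f n) (seqComp F n))
    (hT : T n (seqComp G n w) ∈ ball (0 : E) r) : telescopeInv f T G n w ∈ trap F r n := by
  change ‖seqComp F n (seqCompInv f n (T n (seqComp G n w)))‖ < r
  rw [hf]
  exact mem_ball_zero_iff.1 hT

namespace TelescopingBounds

variable {F f X T G g : ℕ → E → E} {b γ C r ρ : ℝ} {q n : ℕ} {z w : E}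

theorem norm_localInverse_le (h : TelescopingBounds F X g b γ C r q)
    (hT : ∀ v ∈ ball (0 : E) (r / 2), T n v ∈ ball (0 : E) r ∧ X n (T n v) = v)
    (hw : ‖w‖ < r / 2) : ‖T n w‖ ≤ 2 * ‖w‖ := by
  obtain ⟨hmem, hXT⟩ := hT w (mem_ball_zero_iff.2 hw)
  simpa [h.map_zero, hXT] using (h.nearIdOn n).norm_sub_le hmem (mem_ball_self h.radius_pos)

theorem norm_telescopeLimit_telescopeInv_sub_le [CompleteSpace E]
    (h : TelescopingBounds F X g b γ C r q)
    (hf : Function.RightInverse (seqCompInv f n) (seqComp F n))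
    (hg : Function.LeftInverse (seqCompInv g n) (seqComp G n))
    (hT : ∀ v ∈ ball (0 : E) (r / 2), T n v ∈ ball (0 : E) r ∧ X n (T n v) = v)
    (hw : ‖seqComp G n w‖ < r / 2) :
    ‖telescopeLimit F X g (telescopeInv f T G n w) - w‖ ≤
      C * γ ^ n * (2 * ‖seqComp G n w‖) ^ (q + 1) / (1 - γ * b ^ (q + 1)) := by
  have hFn : seqComp F n (telescopeInv f T G n w) = T n (seqComp G n w) := hf _
  obtain ⟨hTmem, hXT⟩ := hT _ (mem_ball_zero_iff.2 hw)
  have hsection : telescope F X g n (telescopeInv f T G n w) = w := by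
    rw [telescope, hFn, hXT, hg]
  have hdist := h.dist_telescope_add_limit_le (telescopeInv_mem_trap hf hTmem) 0
  rw [add_zero, pow_zero, mul_one, hsection, hFn, dist_comm, dist_eq_norm] at hdist
  refine hdist.trans ?_
  have hθ1 : 0 ≤ 1 - γ * b ^ (q + 1) := sub_nonneg.2 h.rate_lt_one.le
  have hγ := h.expansion_nonneg
  have hC := h.defect_nonneg
  gcongr
  exact h.norm_localInverse_le hT hw

theorem telescopeInv_telescope (h : TelescopingBounds F X g b γ C r q)
    (hf : Function.LeftInverse (seqCompInv f n) (seqComp F n))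
    (hg : Function.RightInverse (seqCompInv g n) (seqComp G n))
    (hT : ∀ v ∈ ball (0 : E) (r / 2), T n v ∈ ball (0 : E) r ∧ X n (T n v) = v)
    (hz : z ∈ trap F (r / 3) n) : telescopeInv f T G n (telescope F X g n z) = z := by
  have hsmall : ‖seqComp F n z‖ < r / 3 := hz
  have hzr : ‖seqComp F n z‖ < r := by linarith [h.radius_pos]
  have hX : X n (seqComp F n z) ∈ ball (0 : E) (r / 2) := by
    rw [mem_ball_zero_iff]
    linarith [h.norm_map_le (n := n) hzr]
  have hTX : T n (X n (seqComp F n z)) = seqComp F n z :=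
    (h.nearIdOn n).injOn (hT _ hX).1 (mem_ball_zero_iff.2 hzr) (hT _ hX).2
  rw [telescopeInv, telescope, hg, hTX, hf]

theorem eventually_norm_telescopeLimit_telescopeInv_sub_le [CompleteSpace E]
    (h : TelescopingBounds F X g b γ C r q)
    (hf : ∀ n, Function.RightInverse (seqCompInv f n) (seqComp F n))
    (hg : ∀ n, Function.LeftInverse (seqCompInv g n) (seqComp G n))
    (hT : ∀ n, ∀ v ∈ ball (0 : E) (r / 2), T n v ∈ ball (0 : E) r ∧ X n (T n v) = v)
    (hG : HasGeometricDecay G ρ) (hρ0 : 0 ≤ ρ) (hρ1 : ρ < 1) (hγρ : γ * ρ ^ (q + 1) < 1)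
    (R : ℝ) {ε : ℝ} (hε : 0 < ε) :
    ∀ᶠ n in atTop, ∀ w ∈ ball (0 : E) R,
      ‖telescopeLimit F X g (telescopeInv f T G n w) - w‖ ≤ ε := by
  obtain ⟨A, hA⟩ := hG R
  have hγ := h.expansion_nonneg
  have hC := h.defect_nonneg
  have hθ1 : 0 ≤ 1 - γ * b ^ (q + 1) := sub_nonneg.2 h.rate_lt_one.le
  have hgeom : Tendsto (fun n => C * (2 * A) ^ (q + 1) * (γ * ρ ^ (q + 1)) ^ n /
      (1 - γ * b ^ (q + 1))) atTop (𝓝 0) := by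
    have hpow := tendsto_pow_atTop_nhds_zero_of_lt_one (by positivity) hγρ
    simpa using (hpow.const_mul (C * (2 * A) ^ (q + 1))).div_const (1 - γ * b ^ (q + 1))
  filter_upwards [hgeom.eventually_le_const hε,
    hG.eventually_norm_lt hρ0 hρ1 (half_pos h.radius_pos) R] with n hn hsmall w hw
  refine (h.norm_telescopeLimit_telescopeInv_sub_le (hf n) (hg n) (hT n) (hsmall w hw)).trans ?_
  calc C * γ ^ n * (2 * ‖seqComp G n w‖) ^ (q + 1) / (1 - γ * b ^ (q + 1))
      ≤ C * γ ^ n * (2 * (A * ρ ^ n)) ^ (q + 1) / (1 - γ * b ^ (q + 1)) := by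
        gcongr
        exact hA n w hw
    _ = C * (2 * A) ^ (q + 1) * (γ * ρ ^ (q + 1)) ^ n / (1 - γ * b ^ (q + 1)) := by ring
    _ ≤ ε := hn

variable [NormedSpace ℂ E]

theorem approxInverses_telescopeInv [CompleteSpace E] (h : TelescopingBounds F X g b γ C r q)
    (hf : ∀ n, IsHolomorphicInverse (seqCompInv f n) (seqComp F n))
    (hg : ∀ n, IsHolomorphicInverse (seqCompInv g n) (seqComp G n))
    (hTdiff : ∀ n, DifferentiableOn ℂ (T n) (ball 0 (r / 2)))
    (hT : ∀ n, ∀ v ∈ ball (0 : E) (r / 2), T n v ∈ ball (0 : E) r ∧ X n (T n v) = v)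
    (hG : HasGeometricDecay G ρ) (hρ0 : 0 ≤ ρ) (hρ1 : ρ < 1) (hγρ : γ * ρ ^ (q + 1) < 1) :
    ApproxInverses (telescopeInv f T G) (telescopeLimit F X g) (basin F) := by
  have hsmall := hG.eventually_norm_lt hρ0 hρ1 (half_pos h.radius_pos)
  constructor
  case differentiableOn =>
    intro R
    filter_upwards [hsmall R] with n hn
    exact (hf n).differentiable_inv.comp_differentiableOn <|
      (hTdiff n).comp (hg n).differentiable.differentiableOn
        fun w hw => mem_ball_zero_iff.2 (hn w hw)
  case mapsTo =>
    intro R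
    filter_upwards [hsmall R] with n hn w hw
    exact h.trap_subset_basin h.radius_le_one
      (telescopeInv_mem_trap (hf n).rightInverse (hT n _ (mem_ball_zero_iff.2 (hn w hw))).1)
  case norm_sub_le =>
    intro R ε hε
    exact h.eventually_norm_telescopeLimit_telescopeInv_sub_le (fun n => (hf n).rightInverse)
      (fun n => (hg n).leftInverse) hT hG hρ0 hρ1 hγρ R hε
  case mem_image =>
    intro z hz
    refine ⟨‖telescopeLimit F X g z‖ + 1, ?_⟩
    have hbound : ∀ᶠ n in atTop,
        telescope F X g n z ∈ ball (0 : E) (‖telescopeLimit F X g z‖ + 1) :=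
      (h.tendsto_telescope hz).eventually (isOpen_ball.mem_nhds (by simp))
    filter_upwards [hbound, eventually_mem_trap (div_pos h.radius_pos three_pos) hz] with n hn htrap
    exact ⟨_, hn, h.telescopeInv_telescope (hf n).leftInverse (hg n).rightInverse (hT n) htrap⟩

theorem isBiholomorphicOnto_telescopeLimit [CompleteSpace E]
    (h : TelescopingBounds F X g b γ C r q) (hf : ∀ n, IsHolomorphicInverse (f n) (F n))
    (hg : ∀ n, IsHolomorphicInverse (g n) (G n)) (hX : ∀ n, Differentiable ℂ (X n))
    (hG : HasGeometricDecay G ρ) (hρ0 : 0 ≤ ρ) (hρ1 : ρ < 1) (hγρ : γ * ρ ^ (q + 1) < 1) :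
    IsBiholomorphicOnto (telescopeLimit F X g) (basin F) := by
  have hfn := isHolomorphicInverse_seqCompInv hf
  have hgn := isHolomorphicInverse_seqCompInv hg
  have hlocal := fun n =>
    (h.nearIdOn n).exists_differentiableOn_rightInverse h.radius_pos (hX n).differentiableOn
  simp only [h.map_zero] at hlocal
  choose T hTdiff hT using hlocal
  exact (h.approxInverses_telescopeInv hfn hgn hTdiff hT hG hρ0 hρ1 hγρ).isBiholomorphicOnto <|
    h.differentiableOn_telescopeLimit (fun n => (hfn n).differentiable.continuous)
      fun n => (hgn n).differentiable_inv.comp ((hX n).comp (hfn n).differentiable)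

end TelescopingBounds

end TelescopeInverse

section Polynomials

/-- The number of monomials of degree at most `D` in the variables `σ`. -/
def monomialCount (σ : Type*) (D : ℕ) : ℕ :=
  {d : σ →₀ ℕ | d.degree ≤ D}.ncard

theorem card_support_le_monomialCount {σ R : Type*} [Finite σ] [CommSemiring R] {D : ℕ}
    {p : MvPolynomial σ R} (hdeg : p.totalDegree ≤ D) : p.support.card ≤ monomialCount σ D := by
  rw [← Set.ncard_coe_finset]
  exact Set.ncard_le_ncard (fun d hd => (MvPolynomial.le_totalDegree hd).trans hdeg)
    (Finsupp.finite_of_degree_le D)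

theorem norm_eval_le {σ 𝕜 : Type*} [Finite σ] [NormedField 𝕜] {p : MvPolynomial σ 𝕜} {D m : ℕ}
    {M B τ : ℝ} {z : σ → 𝕜} (hdeg : p.totalDegree ≤ D) (hcoeff : ∀ d, ‖p.coeff d‖ ≤ M)
    (horder : ∀ d ∈ p.support, m ≤ d.degree) (hB : 1 ≤ B) (hτ0 : 0 ≤ τ) (hτ1 : τ ≤ 1)
    (hz : ∀ i ∈ p.vars, ‖z i‖ ≤ B * τ) :
    ‖MvPolynomial.eval z p‖ ≤ monomialCount σ D * M * (B ^ D * τ ^ m) := by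
  have hM : 0 ≤ M := (norm_nonneg _).trans (hcoeff 0)
  have : 0 ≤ B := zero_le_one.trans hB
  have hmonomial : ∀ d ∈ p.support, ∏ i ∈ d.support, ‖z i‖ ^ d i ≤ B ^ D * τ ^ m := fun d hd =>
    calc ∏ i ∈ d.support, ‖z i‖ ^ d i ≤ ∏ i ∈ d.support, (B * τ) ^ d i := by
          gcongr with i hi
          exact hz i ((MvPolynomial.mem_vars_iff_mem_support i).2 ⟨d, hd, hi⟩)
      _ = B ^ d.degree * τ ^ d.degree := by
          rw [Finset.prod_pow_eq_pow_sum, ← Finsupp.degree_apply, mul_pow]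
      _ ≤ B ^ D * τ ^ m := by
          gcongr ?_ * ?_
          · exact pow_le_pow_right₀ hB ((MvPolynomial.le_totalDegree hd).trans hdeg)
          · exact pow_le_pow_of_le_one hτ0 hτ1 (horder d hd)
  rw [MvPolynomial.eval_eq]
  calc ‖∑ d ∈ p.support, p.coeff d * ∏ i ∈ d.support, z i ^ d i‖
      ≤ ∑ _d ∈ p.support, M * (B ^ D * τ ^ m) := by
        refine norm_sum_le_of_le _ fun d hd => ?_
        rw [norm_mul, norm_prod]
        simp only [norm_pow]
        exact mul_le_mul (hcoeff d) (hmonomial d hd) (by positivity) hM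
    _ = p.support.card * M * (B ^ D * τ ^ m) := by rw [Finset.sum_const, nsmul_eq_mul, mul_assoc]
    _ ≤ monomialCount σ D * M * (B ^ D * τ ^ m) := by
        gcongr
        exact card_support_le_monomialCount hdeg

theorem differentiable_eval {σ 𝕜 E : Type*} [NontriviallyNormedField 𝕜]
    [NormedAddCommGroup E] [NormedSpace 𝕜 E] {p : MvPolynomial σ 𝕜} {f : E → σ → 𝕜}
    (hf : ∀ i ∈ p.vars, Differentiable 𝕜 fun x => f x i) :
    Differentiable 𝕜 fun x => MvPolynomial.eval (f x) p := by
  classical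
  simp only [MvPolynomial.eval_eq]
  refine Differentiable.fun_sum fun d hd => .const_mul (fun x => ?_) _
  refine (HasFDerivAt.finsetProd fun i hi => DifferentiableAt.hasFDerivAt ?_).differentiableAt
  exact (hf i ((MvPolynomial.mem_vars_iff_mem_support i).2 ⟨d, hd, hi⟩) x).fun_pow _

section DropLinear

variable {σ R : Type*} [CommRing R] {p : MvPolynomial σ R} {j : σ}

/-- The polynomial `p` with its linear term in the variable `j` removed. -/
def dropLinear (j : σ) (p : MvPolynomial σ R) : MvPolynomial σ R :=
  p - MvPolynomial.monomial (Finsupp.single j 1) (p.coeff (Finsupp.single j 1))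

theorem coeff_dropLinear_self : (dropLinear j p).coeff (Finsupp.single j 1) = 0 := by
  classical simp [dropLinear]

theorem coeff_dropLinear_of_ne {d : σ →₀ ℕ} (hd : d ≠ Finsupp.single j 1) :
    (dropLinear j p).coeff d = p.coeff d := by
  classical simp [dropLinear, MvPolynomial.coeff_monomial, hd.symm]

theorem ne_single_of_mem_support_dropLinear {d : σ →₀ ℕ} (hd : d ∈ (dropLinear j p).support) :
    d ≠ Finsupp.single j 1 := by
  rintro rfl
  exact MvPolynomial.mem_support_iff.1 hd coeff_dropLinear_self

theorem support_dropLinear_subset : (dropLinear j p).support ⊆ p.support := fun d hd => by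
  have hne := ne_single_of_mem_support_dropLinear hd
  rwa [MvPolynomial.mem_support_iff, coeff_dropLinear_of_ne hne,
    ← MvPolynomial.mem_support_iff] at hd

theorem totalDegree_dropLinear_le : (dropLinear j p).totalDegree ≤ p.totalDegree :=
  Finset.sup_mono support_dropLinear_subset

theorem eval_eq_linear_add_eval_dropLinear (z : σ → R) :
    MvPolynomial.eval z p =
      p.coeff (Finsupp.single j 1) * z j + MvPolynomial.eval z (dropLinear j p) := by
  simp [dropLinear, MvPolynomial.eval_monomial]

theorem norm_coeff_dropLinear_le {𝕜 : Type*} [NormedField 𝕜] {p : MvPolynomial σ 𝕜} {M : ℝ}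
    (hcoeff : ∀ d, ‖p.coeff d‖ ≤ M) (d : σ →₀ ℕ) : ‖(dropLinear j p).coeff d‖ ≤ M := by
  by_cases hd : d = Finsupp.single j 1
  · rw [hd, coeff_dropLinear_self, norm_zero]
    exact (norm_nonneg _).trans (hcoeff 0)
  · rw [coeff_dropLinear_of_ne hd]
    exact hcoeff d

theorem one_le_degree_of_coeff_zero {p : MvPolynomial σ R} (hconst : p.coeff 0 = 0) {d : σ →₀ ℕ}
    (hd : d ∈ p.support) : 1 ≤ d.degree := by
  rw [Nat.one_le_iff_ne_zero, Ne, Finsupp.degree_eq_zero_iff]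
  rintro rfl
  exact MvPolynomial.mem_support_iff.1 hd hconst

theorem two_le_degree_of_coeff_linear {p : MvPolynomial σ R} (hconst : p.coeff 0 = 0)
    (hlin : ∀ i, p.coeff (Finsupp.single i 1) = 0) {d : σ →₀ ℕ} (hd : d ∈ p.support) :
    2 ≤ d.degree := by
  refine (one_le_degree_of_coeff_zero hconst hd).lt_of_ne' fun hone => ?_
  obtain ⟨i, rfl⟩ := (Finsupp.sum_eq_one_iff d).1 hone
  exact MvPolynomial.mem_support_iff.1 hd (hlin i)

end DropLinear

section PolynomialMaps

variable {k : ℕ} {P : Fin k → MvPolynomial (Fin k) ℂ} {D : ℕ} {M : ℝ}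

theorem norm_le_sum_norm_apply {ι 𝕜 : Type*} [Fintype ι] [RCLike 𝕜] (v : EuclideanSpace 𝕜 ι) :
    ‖v‖ ≤ ∑ j, ‖v j‖ := by
  rw [EuclideanSpace.norm_eq]
  exact Real.sqrt_le_iff.2 ⟨Finset.sum_nonneg fun _ _ => norm_nonneg _,
    Finset.sum_sq_le_sq_sum_of_nonneg fun _ _ => norm_nonneg _⟩

theorem evalPolyMap_apply (P : Fin k → MvPolynomial (Fin k) ℂ) (z : Ck k) (j : Fin k) :
    evalPolyMap P z j = (P j).coeff (Finsupp.single j 1) * z j +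
      MvPolynomial.eval (fun i => z i) (dropLinear j (P j)) :=
  eval_eq_linear_add_eval_dropLinear _

theorem coeff_mul_rightInverse_apply {Q : Ck k → Ck k}
    (hQ : Function.RightInverse Q (evalPolyMap P)) (w : Ck k) (j : Fin k) :
    (P j).coeff (Finsupp.single j 1) * Q w j =
      w j - MvPolynomial.eval (fun i => Q w i) (dropLinear j (P j)) := by
  rw [eq_sub_iff_add_eq, ← evalPolyMap_apply, hQ]

theorem differentiable_evalPolyMap (P : Fin k → MvPolynomial (Fin k) ℂ) :
    Differentiable ℂ (evalPolyMap P) :=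
  differentiable_euclidean.2 fun _ => differentiable_eval fun _ _ => by fun_prop

theorem norm_evalPolyMap_sub_self_le (hconst : ∀ j, (P j).coeff 0 = 0)
    (hlin : ∀ j i : Fin k, (P j).coeff (Finsupp.single i 1) = if i = j then 1 else 0)
    (hdeg : ∀ j, (P j).totalDegree ≤ D) (hcoeff : ∀ j d, ‖(P j).coeff d‖ ≤ M) {z : Ck k}
    (hz : ‖z‖ ≤ 1) :
    ‖evalPolyMap P z - z‖ ≤ k * (monomialCount (Fin k) D * M) * ‖z‖ ^ 2 := by
  have hcoord : ∀ j, ‖(evalPolyMap P z - z) j‖ ≤ monomialCount (Fin k) D * M * ‖z‖ ^ 2 := by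
    intro j
    have hconst' : (dropLinear j (P j)).coeff 0 = 0 := by
      rw [coeff_dropLinear_of_ne (Finsupp.single_ne_zero.2 one_ne_zero).symm, hconst]
    have hlin' : ∀ i, (dropLinear j (P j)).coeff (Finsupp.single i 1) = 0 := fun i => by
      rcases eq_or_ne i j with rfl | hij
      · exact coeff_dropLinear_self
      · rw [coeff_dropLinear_of_ne ((Finsupp.single_left_injective one_ne_zero).ne hij), hlin,
          if_neg hij]
    rw [PiLp.sub_apply, evalPolyMap_apply, hlin, if_pos rfl, one_mul, add_sub_cancel_left]
    simpa only [one_pow, one_mul] using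
      norm_eval_le (totalDegree_dropLinear_le.trans (hdeg j)) (norm_coeff_dropLinear_le (hcoeff j))
        (fun d => two_le_degree_of_coeff_linear hconst' hlin') le_rfl (norm_nonneg z) hz
        fun i _ => by simpa using PiLp.norm_apply_le z i
  calc ‖evalPolyMap P z - z‖ ≤ ∑ j, ‖(evalPolyMap P z - z) j‖ := norm_le_sum_norm_apply _
    _ ≤ ∑ _j : Fin k, monomialCount (Fin k) D * M * ‖z‖ ^ 2 :=
        Finset.sum_le_sum fun j _ => hcoord j
    _ = k * (monomialCount (Fin k) D * M) * ‖z‖ ^ 2 := by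
        rw [Finset.sum_const, Finset.card_univ, Fintype.card_fin, nsmul_eq_mul, mul_assoc (k : ℝ)]

end PolynomialMaps

end Polynomials

section Triangular

variable {k : ℕ}

namespace LowerTriPolyMap

variable {P : Fin k → MvPolynomial (Fin k) ℂ} {D : ℕ} {M : ℝ} {j : Fin k}

theorem lt_of_mem_vars_dropLinear (hP : LowerTriPolyMap P) {i : Fin k}
    (hi : i ∈ (dropLinear j (P j)).vars) : i < j := by
  obtain ⟨d, hd, hid⟩ := (MvPolynomial.mem_vars_iff_mem_support i).1 hi
  by_contra! hji
  rcases (hP j).2 d (support_dropLinear_subset hd) with hlin | hlower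
  · exact ne_single_of_mem_support_dropLinear hd hlin
  · exact Finsupp.mem_support_iff.1 hid (hlower i hji)

theorem coeff_zero_dropLinear (hP : LowerTriPolyMap P) : (dropLinear j (P j)).coeff 0 = 0 := by
  rw [coeff_dropLinear_of_ne (Finsupp.single_ne_zero.2 one_ne_zero).symm, (hP j).1]

theorem eval_dropLinear_congr (hP : LowerTriPolyMap P) {z z' : Ck k}
    (h : ∀ i < j, z i = z' i) :
    MvPolynomial.eval (fun i => z i) (dropLinear j (P j)) =
      MvPolynomial.eval (fun i => z' i) (dropLinear j (P j)) :=
  MvPolynomial.eval₂Hom_congr' rfl (fun i hi _ => h i (hP.lt_of_mem_vars_dropLinear hi)) rfl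

theorem norm_evalPolyMap_apply_le (hP : LowerTriPolyMap P) (hdeg : (P j).totalDegree ≤ D)
    (hcoeff : ∀ d, ‖(P j).coeff d‖ ≤ M) {B τ : ℝ} (hB : 1 ≤ B) (hτ0 : 0 ≤ τ) (hτ1 : τ ≤ 1)
    {z : Ck k} (hz : ∀ i < j, ‖z i‖ ≤ B * τ) :
    ‖evalPolyMap P z j‖ ≤ ‖(P j).coeff (Finsupp.single j 1)‖ * ‖z j‖ +
      monomialCount (Fin k) D * M * (B ^ D * τ) := by
  rw [evalPolyMap_apply, ← norm_mul]
  refine (norm_add_le _ _).trans (add_le_add_right ?_ _)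
  simpa only [pow_one] using
    norm_eval_le (totalDegree_dropLinear_le.trans hdeg) (norm_coeff_dropLinear_le hcoeff)
      (fun d => one_le_degree_of_coeff_zero hP.coeff_zero_dropLinear) hB hτ0 hτ1
      fun i hi => hz i (hP.lt_of_mem_vars_dropLinear hi)

variable {Q : Ck k → Ck k}

theorem rightInverse_apply_congr (hP : LowerTriPolyMap P)
    (hQ : Function.RightInverse Q (evalPolyMap P)) {w w' : Ck k}
    (hdiag : ∀ i ≤ j, (P i).coeff (Finsupp.single i 1) ≠ 0) (h : ∀ i ≤ j, w i = w' i) :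
    Q w j = Q w' j := by
  induction j using WellFoundedLT.induction with
  | ind j ih =>
    have hbefore : ∀ i < j, Q w i = Q w' i := fun i hi =>
      ih i hi (fun l hl => hdiag l (hl.trans hi.le)) fun l hl => h l (hl.trans hi.le)
    refine mul_left_cancel₀ (hdiag j le_rfl) ?_
    rw [coeff_mul_rightInverse_apply hQ, coeff_mul_rightInverse_apply hQ, h j le_rfl,
      hP.eval_dropLinear_congr hbefore]

/-- If the coefficient vanished, the `j`-th coordinate of a point would be determined by the
preceding ones, so `0` and the `j`-th basis vector could not both be attained. -/
theorem coeff_single_ne_zero_of_rightInverse (hP : LowerTriPolyMap P)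
    (hQ : Function.RightInverse Q (evalPolyMap P)) (j : Fin k) :
    (P j).coeff (Finsupp.single j 1) ≠ 0 := by
  induction j using WellFoundedLT.induction with
  | ind j ih =>
    intro hzero
    have hattained : ∀ w : Ck k,
        w j = MvPolynomial.eval (fun i => Q w i) (dropLinear j (P j)) := fun w =>
      sub_eq_zero.1 (by simpa [hzero] using (coeff_mul_rightInverse_apply hQ w j).symm)
    have hbefore : ∀ i < j, Q (EuclideanSpace.single j 1) i = Q 0 i := fun i hi =>
      hP.rightInverse_apply_congr hQ (fun l hl => ih l (hl.trans_lt hi)) fun l hl => by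
        simp [(hl.trans_lt hi).ne]
    have hone : (EuclideanSpace.single j 1 : Ck k) j = (0 : Ck k) j := by
      rw [hattained, hP.eval_dropLinear_congr hbefore, ← hattained]
    simp at hone

theorem differentiable_of_rightInverse (hP : LowerTriPolyMap P)
    (hQ : Function.RightInverse Q (evalPolyMap P)) : Differentiable ℂ Q := by
  refine differentiable_euclidean.2 fun j => ?_
  induction j using WellFoundedLT.induction with
  | ind j ih =>
    have hsolve : (fun w => Q w j) = fun w => ((P j).coeff (Finsupp.single j 1))⁻¹ *
        (w j - MvPolynomial.eval (fun i => Q w i) (dropLinear j (P j))) := funext fun w => by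
      rw [← coeff_mul_rightInverse_apply hQ,
        inv_mul_cancel_left₀ (hP.coeff_single_ne_zero_of_rightInverse hQ j)]
    rw [hsolve]
    exact (Differentiable.sub (by fun_prop) <| differentiable_eval fun i hi =>
      ih i (hP.lt_of_mem_vars_dropLinear hi)).const_mul _

end LowerTriPolyMap

theorem le_mul_pow_of_le_mul_add {u : ℕ → ℝ} {b ρ K R : ℝ} (hb : 0 ≤ b) (hbρ : b < ρ) (hK : 0 ≤ K)
    (hR : 0 ≤ R) (hzero : u 0 ≤ R) (hsucc : ∀ n, u (n + 1) ≤ b * u n + K * ρ ^ n) (n : ℕ) :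
    u n ≤ (R + K / (ρ - b)) * ρ ^ n := by
  have hgap : 0 < ρ - b := sub_pos.2 hbρ
  induction n with
  | zero =>
    have hquot : 0 ≤ K / (ρ - b) := by positivity
    linarith [pow_zero ρ]
  | succ n ih =>
    have hK' : K = K / (ρ - b) * (ρ - b) := (div_mul_cancel₀ K hgap.ne').symm
    have hρn : 0 ≤ ρ ^ n := pow_nonneg (hb.trans hbρ.le) n
    calc u (n + 1) ≤ b * ((R + K / (ρ - b)) * ρ ^ n) + K * ρ ^ n :=
          (hsucc n).trans (by gcongr)
      _ = (R * b + K / (ρ - b) * ρ) * ρ ^ n := by rw [hK']; field_simp; ring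
      _ ≤ (R * ρ + K / (ρ - b) * ρ) * ρ ^ n := by gcongr
      _ = (R + K / (ρ - b)) * ρ ^ (n + 1) := by ring

variable {G : ℕ → Fin k → MvPolynomial (Fin k) ℂ} {D : ℕ} {M b ρ : ℝ}

theorem exists_norm_seqComp_apply_le (hG : ∀ n, LowerTriPolyMap (G n))
    (hdeg : ∀ n j, (G n j).totalDegree ≤ D) (hcoeff : ∀ n j d, ‖(G n j).coeff d‖ ≤ M)
    (hdiag : ∀ n j, ‖(G n j).coeff (Finsupp.single j 1)‖ ≤ b) (hb : 0 ≤ b) (hbρ : b < ρ)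
    (hρ : ρ < 1) (R : ℝ) (j : Fin k) :
    ∃ A, ∀ n, ∀ w ∈ ball (0 : Ck k) R,
      ‖seqComp (fun n => evalPolyMap (G n)) n w j‖ ≤ A * ρ ^ n := by
  induction j using WellFoundedLT.induction with
  | ind j ih =>
    choose! A hA using ih
    obtain ⟨B₀, hB₀⟩ := (Set.finite_range A).bddAbove
    set B := max 1 B₀
    have hB : 1 ≤ B := le_max_left _ _
    have hAB : ∀ i, A i ≤ B := fun i => (hB₀ ⟨i, rfl⟩).trans (le_max_right _ _)
    have hM : 0 ≤ M := (norm_nonneg _).trans (hcoeff 0 j 0)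
    have hρ0 : 0 ≤ ρ := hb.trans hbρ.le
    set K := monomialCount (Fin k) D * M * B ^ D
    refine ⟨R + K / (ρ - b), fun n w hw => ?_⟩
    have hwR : ‖w‖ < R := mem_ball_zero_iff.1 hw
    refine le_mul_pow_of_le_mul_add
      (u := fun n => ‖seqComp (fun n => evalPolyMap (G n)) n w j‖)
      hb hbρ (by positivity) ((norm_nonneg w).trans hwR.le)
      ((PiLp.norm_apply_le w j).trans hwR.le) (fun n => ?_) n
    calc ‖seqComp (fun n => evalPolyMap (G n)) (n + 1) w j‖
        ≤ ‖(G n j).coeff (Finsupp.single j 1)‖ * ‖seqComp (fun n => evalPolyMap (G n)) n w j‖ +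
            monomialCount (Fin k) D * M * (B ^ D * ρ ^ n) :=
          (hG n).norm_evalPolyMap_apply_le (hdeg n j) (hcoeff n j) hB (pow_nonneg hρ0 n)
            (pow_le_one₀ hρ0 hρ.le) fun i hi => (hA i hi n w hw).trans (by gcongr; exact hAB i)
      _ ≤ b * ‖seqComp (fun n => evalPolyMap (G n)) n w j‖ + K * ρ ^ n := by
          rw [← mul_assoc]
          gcongr
          exact hdiag n j

theorem hasGeometricDecay_evalPolyMap (hG : ∀ n, LowerTriPolyMap (G n))
    (hdeg : ∀ n j, (G n j).totalDegree ≤ D) (hcoeff : ∀ n j d, ‖(G n j).coeff d‖ ≤ M)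
    (hdiag : ∀ n j, ‖(G n j).coeff (Finsupp.single j 1)‖ ≤ b) (hb : 0 ≤ b) (hbρ : b < ρ)
    (hρ : ρ < 1) : HasGeometricDecay (fun n => evalPolyMap (G n)) ρ := fun R => by
  choose A hA using exists_norm_seqComp_apply_le hG hdeg hcoeff hdiag hb hbρ hρ R
  refine ⟨∑ j, A j, fun n w hw => (norm_le_sum_norm_apply _).trans ?_⟩
  rw [Finset.sum_mul]
  exact Finset.sum_le_sum fun j _ => hA j n w hw

end Triangular

theorem norm_derivMatrix_apply_le {k : ℕ} {F : Ck k → Ck k} (hF : DifferentiableAt ℂ F 0)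
    {b : ℝ} (hb : 0 ≤ b) (hbound : ∀ z ∈ ball (0 : Ck k) 1, ‖F z‖ ≤ b * ‖z‖) (i j : Fin k) :
    ‖derivMatrix F i j‖ ≤ b := by
  have hzero : F 0 = 0 := by simpa using hbound 0 (mem_ball_self one_pos)
  have hop : ‖fderiv ℂ F 0‖ ≤ b := by
    refine hF.hasFDerivAt.le_of_lip' hb ?_
    filter_upwards [ball_mem_nhds (0 : Ck k) one_pos] with z hz
    simpa [hzero] using hbound z hz
  calc ‖derivMatrix F i j‖ ≤ ‖fderiv ℂ F 0 (EuclideanSpace.single j 1)‖ := PiLp.norm_apply_le _ i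
    _ ≤ ‖fderiv ℂ F 0‖ * ‖(EuclideanSpace.single j 1 : Ck k)‖ := (fderiv ℂ F 0).le_opNorm _
    _ ≤ b := by simpa using hop

theorem exists_rate_between {b γ : ℝ} {q : ℕ} (hb : b < 1) (hrate : γ * b ^ q < 1) :
    ∃ ρ, b < ρ ∧ ρ < 1 ∧ γ * ρ ^ q < 1 := by
  have hcont : ContinuousAt (fun ρ : ℝ => γ * ρ ^ q) b := by fun_prop
  have hnear : ∀ᶠ ρ in 𝓝[>] b, γ * ρ ^ q < 1 :=
    (hcont.eventually_lt_const hrate).filter_mono nhdsWithin_le_nhds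
  obtain ⟨ρ, ⟨hbρ, hρ⟩, hγρ⟩ := (Filter.Eventually.and (Ioo_mem_nhdsGT hb) hnear).exists
  exact ⟨ρ, hbρ, hρ, hγρ⟩

/-- The radius is chosen so that the displacement `L * ‖z‖ ^ 2` is at most `r / 2` on the ball of
radius `3 * r`; by Cauchy's estimate it is then `1 / 2`-Lipschitz on the ball of radius `r`. -/
theorem exists_telescopingBounds {E : Type*} [NormedAddCommGroup E] [NormedSpace ℂ E]
    {F X g : ℕ → E → E} {b γ C L : ℝ} {q : ℕ} (hF : UniformlyContracting F b) (hγ : 0 ≤ γ)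
    (hrate : γ * b ^ (q + 1) < 1)
    (hlip : ∀ n, ∀ w ∈ ball (0 : E) 1, ∀ w' ∈ ball (0 : E) 1,
      ‖seqCompInv g n w - seqCompInv g n w'‖ ≤ γ ^ n * ‖w - w'‖)
    (hX : ∀ n, Differentiable ℂ (X n))
    (hquad : ∀ n, ∀ z ∈ ball (0 : E) 1, ‖X n z - z‖ ≤ L * ‖z‖ ^ 2) (hL : 0 ≤ L) (hC : 0 ≤ C)
    (hdefect : ∀ n, ∀ z ∈ ball (0 : E) 1,
      ‖g n (X (n + 1) (F n z)) - X n z‖ ≤ C * ‖z‖ ^ (q + 1)) :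
    ∃ r, TelescopingBounds F X g b γ C r q := by
  set r := 1 / (18 * L + 4 * C + 3)
  have hr : 0 < r := by positivity
  have hsum : 18 * (L * r) + 4 * (C * r) + 3 * r = 1 :=
    calc 18 * (L * r) + 4 * (C * r) + 3 * r = (18 * L + 4 * C + 3) * r := by ring
      _ = 1 := mul_one_div_cancel (by positivity)
  have hLr : 0 ≤ L * r := by positivity
  have hCr : 0 ≤ C * r := by positivity
  have hdisp : ∀ n, ∀ z ∈ ball (0 : E) (3 * r), ‖X n z - z‖ ≤ r / 2 := fun n z hz => by
    have hz3 : ‖z‖ < 3 * r := mem_ball_zero_iff.1 hz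
    calc ‖X n z - z‖ ≤ L * ‖z‖ ^ 2 := hquad n z (mem_ball_zero_iff.2 (by linarith))
      _ ≤ L * (3 * r) ^ 2 := by gcongr
      _ = 9 * (L * r) * r := by ring
      _ ≤ 1 / 2 * r := by gcongr; linarith
      _ = r / 2 := by ring
  exact ⟨r, { hF with
    expansion_nonneg := hγ
    rate_lt_one := hrate
    lipschitz := hlip
    map_zero := fun n => by simpa using hquad n 0 (mem_ball_self one_pos)
    nearIdOn := fun n => by
      simpa only [mul_div_cancel_left₀ r three_ne_zero] using
        nearIdOn_of_norm_sub_le (hX n).differentiableOn (hdisp n) (by linarith)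
    defect_nonneg := hC
    defect_le := hdefect
    radius_pos := hr
    radius_le := by linarith
    defect_mul_radius_le := by linarith }⟩

theorem telescoping_limit_biholo_general {k : ℕ} {F : ℕ → Ck k → Ck k}
    (hauto : ∀ n, IsAutomorphism (F n)) {b : ℝ} (hF : UniformlyContracting F b)
    {G : ℕ → Fin k → MvPolynomial (Fin k) ℂ} (hGtri : ∀ n, LowerTriPolyMap (G n))
    (hGdiag : ∀ n j, ‖(G n j).coeff (Finsupp.single j 1)‖ ≤ b)
    {DG : ℕ} (hGdeg : ∀ n j, (G n j).totalDegree ≤ DG)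
    {MG : ℝ} (hGcoeff : ∀ n j d, ‖(G n j).coeff d‖ ≤ MG) {Ginv : ℕ → Ck k → Ck k}
    (hGinv : ∀ n, Function.LeftInverse (Ginv n) (evalPolyMap (G n)) ∧
      Function.RightInverse (Ginv n) (evalPolyMap (G n)))
    {X : ℕ → Fin k → MvPolynomial (Fin k) ℂ} (hXconst : ∀ n j, (X n j).coeff 0 = 0)
    (hXlin : ∀ n (j i : Fin k), (X n j).coeff (Finsupp.single i 1) = if i = j then 1 else 0)
    {DX : ℕ} (hXdeg : ∀ n j, (X n j).totalDegree ≤ DX)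
    {MX : ℝ} (hXcoeff : ∀ n j d, ‖(X n j).coeff d‖ ≤ MX) {γ : ℝ} (hγ : 0 ≤ γ)
    (hlip : ∀ n, ∀ w ∈ ball (0 : Ck k) 1, ∀ w' ∈ ball (0 : Ck k) 1,
      ‖seqCompInv Ginv n w - seqCompInv Ginv n w'‖ ≤ γ ^ n * ‖w - w'‖)
    {q : ℕ} (hrate : γ * b ^ (q + 1) < 1) {C : ℝ} (hC : 0 ≤ C)
    (hdefect : ∀ n, ∀ z ∈ ball (0 : Ck k) 1,
      ‖Ginv n (evalPolyMap (X (n + 1)) (F n z)) - evalPolyMap (X n) z‖ ≤ C * ‖z‖ ^ (q + 1)) :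
    ∃ Ψ : Ck k → Ck k,
      (∀ K ⊆ basin F, IsCompact K →
        TendstoUniformlyOn (telescope F (fun n => evalPolyMap (X n)) Ginv) Ψ atTop K) ∧
      IsBiholomorphicOnto Ψ (basin F) := by
  have hX : ∀ n, Differentiable ℂ (evalPolyMap (X n)) := fun n => differentiable_evalPolyMap _
  have hquad : ∀ n, ∀ z ∈ ball (0 : Ck k) 1,
      ‖evalPolyMap (X n) z - z‖ ≤ k * (monomialCount (Fin k) DX * |MX|) * ‖z‖ ^ 2 := fun n z hz =>
    norm_evalPolyMap_sub_self_le (hXconst n) (hXlin n) (hXdeg n)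
      (fun j d => (hXcoeff n j d).trans (le_abs_self MX)) (mem_ball_zero_iff.1 hz).le
  obtain ⟨r, hbounds⟩ :=
    exists_telescopingBounds hF hγ hrate hlip hX hquad (by positivity) hC hdefect
  obtain ⟨ρ, hbρ, hρ, hγρ⟩ := exists_rate_between hF.lt_one hrate
  choose hFdiff f hfdiff hfleft hfright using hauto
  have hFinv : ∀ n, IsHolomorphicInverse (f n) (F n) := fun n =>
    ⟨hFdiff n, hfdiff n, hfleft n, hfright n⟩
  have hGinv' : ∀ n, IsHolomorphicInverse (Ginv n) (evalPolyMap (G n)) := fun n =>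
    ⟨differentiable_evalPolyMap _, (hGtri n).differentiable_of_rightInverse (hGinv n).2,
      (hGinv n).1, (hGinv n).2⟩
  have hdecay : HasGeometricDecay (fun n => evalPolyMap (G n)) ρ :=
    hasGeometricDecay_evalPolyMap hGtri hGdeg hGcoeff hGdiag hF.nonneg hbρ hρ
  exact ⟨_, fun K hKF hK => hbounds.tendstoUniformlyOn_of_isCompact
      (fun n => (isHolomorphicInverse_seqCompInv hFinv n).differentiable.continuous) hKF hK,
    hbounds.isBiholomorphicOnto_telescopeLimit hFinv hGinv' hX hdecay
      (hF.nonneg.trans hbρ.le) hρ hγρ⟩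

/-- **Convergence of the telescoping maps.** Let `F_n` be a uniformly attracting sequence of
correctly ordered automorphisms of `ℂ^k` with contraction constant `b < 1`, with basin
`Ω = {z : F(n)(z) → 0}`. Let `G_n` be lower triangular polynomial automorphisms (with inverses
`Ginv n` of the single maps) with `G_n'(0) = F_n'(0)`, of uniformly bounded degrees and
coefficients, and `X_n` polynomial maps with linear part the identity and uniformly bounded
degrees and coefficients. Assume `γ ≥ 1` with `‖G(n)⁻¹ w - G(n)⁻¹ w'‖ ≤ γ^n ‖w - w'‖` on the
unit ball, `q` with `γ b^q < 1`, and `C > 0` with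
`‖G_n⁻¹(X_n(F_n(z))) - X_{n-1}(z)‖ ≤ C‖z‖^{q+1}` on the unit ball. Then
`Ψ_n = G(n)⁻¹ ∘ X_n ∘ F(n)` converges uniformly on compact subsets of `Ω` to a biholomorphic
map `Ψ : Ω → ℂ^k`; in particular `Ω` is biholomorphic to `ℂ^k`. -/
theorem telescoping_limit_biholo (k : ℕ)
    (F : ℕ → Ck k → Ck k) (hauto : ∀ n, IsAutomorphism (F n)) (hfix : ∀ n, F n 0 = 0)
    (hord : ∀ n, CorrectlyOrdered (F n))
    (a b : ℝ) (ha : 0 < a) (hab : a < b) (hb : b < 1)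
    (hbd : ∀ n, ∀ z ∈ ball (0 : Ck k) 1, a * ‖z‖ ≤ ‖F n z‖ ∧ ‖F n z‖ ≤ b * ‖z‖)
    (ξ : ℝ) (hξ : ξ < 1)
    (hξbd : ∀ n, ∀ l j i : Fin k, l ≤ j →
      ‖derivMatrix (F n) i i‖ * ‖derivMatrix (F n) j j‖ ≤ ξ * ‖derivMatrix (F n) l l‖)
    (G : ℕ → Fin k → MvPolynomial (Fin k) ℂ)
    (hGLT : ∀ n, LowerTriPolyMap (G n))
    (hGlin : ∀ n (j i : Fin k), (G n j).coeff (Finsupp.single i 1) = derivMatrix (F n) j i)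
    (DG : ℕ) (hGdeg : ∀ n j, (G n j).totalDegree ≤ DG)
    (MG : ℝ) (hGco : ∀ n j m, ‖(G n j).coeff m‖ ≤ MG)
    (Ginv : ℕ → Ck k → Ck k)
    (hGinv : ∀ n, Function.LeftInverse (Ginv n) (evalPolyMap (G n)) ∧
      Function.RightInverse (Ginv n) (evalPolyMap (G n)))
    (X : ℕ → Fin k → MvPolynomial (Fin k) ℂ)
    (hXconst : ∀ n j, (X n j).coeff 0 = 0)
    (hXlin : ∀ n (j i : Fin k), (X n j).coeff (Finsupp.single i 1) = if i = j then 1 else 0)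
    (DX : ℕ) (hXdeg : ∀ n j, (X n j).totalDegree ≤ DX)
    (MX : ℝ) (hXco : ∀ n j m, ‖(X n j).coeff m‖ ≤ MX)
    (γ : ℝ) (hγ1 : 1 ≤ γ)
    (hγ : ∀ n, ∀ w ∈ ball (0 : Ck k) 1, ∀ w' ∈ ball (0 : Ck k) 1,
      ‖seqCompInv Ginv n w - seqCompInv Ginv n w'‖ ≤ γ ^ n * ‖w - w'‖)
    (q : ℕ) (hq : γ * b ^ q < 1)
    (C : ℝ) (hC : 0 < C)
    (hest : ∀ n, ∀ z ∈ ball (0 : Ck k) 1,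
      ‖Ginv n (evalPolyMap (X (n + 1)) (F n z)) - evalPolyMap (X n) z‖ ≤ C * ‖z‖ ^ (q + 1)) :
    ∃ Ψ Φ : Ck k → Ck k,
      (∀ K : Set (Ck k),
        K ⊆ {z : Ck k | Tendsto (fun n => seqComp F n z) atTop (𝓝 0)} → IsCompact K →
        TendstoUniformlyOn
          (fun n z => seqCompInv Ginv n (evalPolyMap (X n) (seqComp F n z))) Ψ atTop K) ∧
      DifferentiableOn ℂ Ψ {z : Ck k | Tendsto (fun n => seqComp F n z) atTop (𝓝 0)} ∧
      Differentiable ℂ Φ ∧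
      (∀ w, Φ w ∈ {z : Ck k | Tendsto (fun n => seqComp F n z) atTop (𝓝 0)}) ∧
      (∀ z ∈ {z : Ck k | Tendsto (fun n => seqComp F n z) atTop (𝓝 0)}, Φ (Ψ z) = z) ∧
      (∀ w, Ψ (Φ w) = w) := by
  have hF : UniformlyContracting F b := ⟨(ha.trans hab).le, hb, fun n z hz => (hbd n z hz).2⟩
  have hGdiag : ∀ n j, ‖(G n j).coeff (Finsupp.single j 1)‖ ≤ b := fun n j =>
    hGlin n j j ▸ norm_derivMatrix_apply_le ((hauto n).1 0) hF.nonneg (hF.norm_le n) j j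
  have hrate : γ * b ^ (q + 1) < 1 := lt_of_le_of_lt (mul_le_mul_of_nonneg_left
    (pow_le_pow_of_le_one hF.nonneg hb.le q.le_succ) (zero_le_one.trans hγ1)) hq
  obtain ⟨Ψ, hconv, hΨ, Φ, hΦ⟩ := telescoping_limit_biholo_general hauto hF hGLT hGdiag hGdeg hGco
    hGinv hXconst hXlin hXdeg hXco (zero_le_one.trans hγ1) hγ hrate hC.le hest
  exact ⟨Ψ, Φ, hconv, hΨ, hΦ⟩
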